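/- For fixed T with 0 < T < 1, define E(α, T) = 1/2 + I_1(α, T) - I_2(α, T), where I_1(α,T) = ((1-T)^{(1-2α)/4}/sqrt(2)) ∫_{(1-2α)/2}^∞ ((1-T)^u - (1-T)^{-u}) / ((1 + (1-2α)/(2u))(1-T)^u + (1 - (1-2α)/(2u))(1-T)^{-u})^{3/2} du and I_2(α,T) = (ln(1-T)·(1-T)^{(1-2α)/4}/sqrt(2)) ∫_{(1-2α)/2}^∞ u / sqrt((1 + (1-2α)/(2u))(1-T)^u + (1 - (1-2α)/(2u))(1-T)^{-u}) du. Then E(α, T) - α → -2/ln(1-T) as α → ∞. -/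

import Mathlib

open Real MeasureTheory Filter

lemma fold_odd (f g : ℝ → ℝ) (b : ℝ) (hb : 0 < b) (hodd : ∀ u, f (-u) = - f u)
    (hm : Measurable f) (hg : Continuous g) (hfg : ∀ u, |f u| ≤ g u)
    (hi : IntegrableOn (fun w => f (b + w)) (Set.Ioi 0)) :
    ∫ u in Set.Ioi (-b), f u = ∫ w in Set.Ioi (0:ℝ), f (b + w) := by
  have hpre : (fun w : ℝ => b + w) ⁻¹' (Set.Ioi b) = Set.Ioi 0 := by
    ext w; simp
  have hmp := measurePreserving_add_left (volume : Measure ℝ) b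
  have hemb := measurableEmbedding_addLeft b
  have h1 : ∫ w in Set.Ioi (0:ℝ), f (b + w) = ∫ u in Set.Ioi b, f u := by
    rw [← hpre]; exact hmp.setIntegral_preimage_emb hemb f _
  have h2 : IntegrableOn f (Set.Ioi b) := by
    rw [← hmp.integrableOn_comp_preimage hemb, hpre]; exact hi
  have h3 : IntegrableOn f (Set.Ioc (-b) b) := by
    refine Integrable.mono' (hg.integrableOn_Ioc (a := -b) (b := b)) hm.aestronglyMeasurable ?_
    exact ae_of_all _ hfg
  have h4 : ∫ u in Set.Ioc (-b) b, f u = 0 := by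
    rw [← intervalIntegral.integral_of_le (by linarith)]
    have := intervalIntegral.integral_comp_neg (a := -b) (b := b) f
    simp only [hodd, intervalIntegral.integral_neg, neg_neg] at this
    linarith
  rw [h1, ← Set.Ioc_union_Ioi_eq_Ioi (show -b ≤ b by linarith),
    setIntegral_union (Set.Ioc_disjoint_Ioi le_rfl) measurableSet_Ioi h3 h2, h4, zero_add]

noncomputable def DD (L b u : ℝ) : ℝ :=
  (1 - b/u) * exp (-(u*L)) + (1 + b/u) * exp (u*L)

noncomputable def ss (L b w : ℝ) : ℝ :=
  sqrt (1 - w/(b+w) * (1 - exp (-(2*(b+w)*L)))/2)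

lemma DD_even (L b u : ℝ) : DD L b (-u) = DD L b u := by
  simp only [DD, div_neg, neg_mul, neg_neg]; ring

lemma DD_ge (L b u : ℝ) (hL : 0 < L) (hb : 0 < b) : 2 ≤ DD L b u := by
  have h1 := add_one_le_exp (u*L)
  have h2 := add_one_le_exp (-(u*L))
  have h3 : 0 ≤ b/u * (exp (u*L) - exp (-(u*L))) := by
    rcases le_total 0 u with hu | hu
    · have : exp (-(u*L)) ≤ exp (u*L) := exp_le_exp.2 (by nlinarith [mul_nonneg hu hL.le])
      exact mul_nonneg (by positivity) (by linarith)
    · have : exp (u*L) ≤ exp (-(u*L)) :=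
        exp_le_exp.2 (by nlinarith [mul_nonneg (neg_nonneg.2 hu) hL.le])
      exact mul_nonneg_of_nonpos_of_nonpos (div_nonpos_of_nonneg_of_nonpos hb.le hu) (by linarith)
  unfold DD
  nlinarith

lemma q_bounds (L b w : ℝ) (hL : 0 < L) (hb : 0 < b) (hw : 0 < w) :
    0 ≤ (1 - exp (-(2*(b+w)*L))) ∧ (1 - exp (-(2*(b+w)*L))) ≤ 1 ∧
    0 ≤ w/(b+w) * (1 - exp (-(2*(b+w)*L))) ∧ w/(b+w) * (1 - exp (-(2*(b+w)*L))) ≤ 1 := by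
  have h1 : exp (-(2*(b+w)*L)) ≤ 1 := exp_le_one_iff.2 (by
    have : 0 < 2*(b+w)*L := by positivity
    linarith)
  have h2 := exp_pos (-(2*(b+w)*L))
  have h3 : w/(b+w) ≤ 1 := (div_le_one (by positivity)).2 (by linarith)
  have h4 : 0 ≤ w/(b+w) := by positivity
  refine ⟨by linarith, by linarith, mul_nonneg h4 (by linarith), ?_⟩
  exact mul_le_one₀ h3 (by linarith) (by linarith)

lemma ss_ge (L b w : ℝ) (hL : 0 < L) (hb : 0 < b) (hw : 0 < w) : 1/2 ≤ ss L b w := by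
  obtain ⟨_, _, _, h⟩ := q_bounds L b w hL hb hw
  exact le_sqrt_of_sq_le (by linarith)

lemma ss_sq (L b w : ℝ) (hL : 0 < L) (hb : 0 < b) (hw : 0 < w) :
    ss L b w ^ 2 = 1 - w/(b+w) * (1 - exp (-(2*(b+w)*L)))/2 := by
  obtain ⟨_, _, _, h⟩ := q_bounds L b w hL hb hw
  exact sq_sqrt (by linarith)

lemma DD_sqrt (L b w : ℝ) (hL : 0 < L) (hb : 0 < b) (hw : 0 < w) :
    sqrt (DD L b (b+w)) = sqrt 2 * exp ((b+w)*L/2) * ss L b w := by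
  have hs := ss_ge L b w hL hb hw
  rw [sqrt_eq_iff_mul_self_eq (by linarith [DD_ge L b (b+w) hL hb]) (by positivity)]
  have h2 : sqrt 2 * sqrt 2 = (2:ℝ) := mul_self_sqrt (by norm_num)
  have he : exp ((b+w)*L/2) * exp ((b+w)*L/2) = exp ((b+w)*L) := by rw [← exp_add]; ring_nf
  have he2 : exp (-(2*(b+w)*L)) * exp ((b+w)*L) = exp (-((b+w)*L)) := by rw [← exp_add]; ring_nf
  have hq := ss_sq L b w hL hb hw
  have hbw : b + w ≠ 0 := by positivity
  symm
  calc sqrt 2 * exp ((b+w)*L/2) * ss L b w * (sqrt 2 * exp ((b+w)*L/2) * ss L b w)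
      = (sqrt 2 * sqrt 2) * (exp ((b+w)*L/2) * exp ((b+w)*L/2)) * ss L b w ^ 2 := by ring
    _ = 2 * exp ((b+w)*L) * (1 - w/(b+w) * (1 - exp (-(2*(b+w)*L)))/2) := by rw [h2, he, hq]
    _ = 2 * exp ((b+w)*L) - w/(b+w) * (exp ((b+w)*L) - exp (-(2*(b+w)*L)) * exp ((b+w)*L)) := by
        ring
    _ = DD L b (b+w) := by
        rw [he2, DD]; field_simp; ring

lemma rpow_32 (x : ℝ) (hx : 0 ≤ x) : x ^ ((3:ℝ)/2) = sqrt x ^ 3 := by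
  rw [sqrt_eq_rpow, ← rpow_natCast, ← rpow_mul hx]; norm_num

noncomputable def G1 (L b w : ℝ) : ℝ :=
  exp (-(L/2) * w) * ((1 - exp (-(2*(b+w)*L))) / ss L b w ^ 3)

noncomputable def G2 (L b w : ℝ) : ℝ :=
  exp (-(L/2) * w) * (w + w * (1 - exp (-(2*(b+w)*L))) / 2 / (ss L b w * (1 + ss L b w)))

lemma f1_eq (L b w : ℝ) (hL : 0 < L) (hb : 0 < b) (hw : 0 < w) :
    (exp (-((b+w)*L)) - exp ((b+w)*L)) / (DD L b (b+w)) ^ ((3:ℝ)/2)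
      = -(exp (-(b*L/2)) / (2 * sqrt 2)) * G1 L b w := by
  have hs := ss_ge L b w hL hb hw
  rw [rpow_32 _ (by linarith [DD_ge L b (b+w) hL hb]), DD_sqrt L b w hL hb hw, G1]
  have h2 : sqrt 2 ^ 2 = (2:ℝ) := sq_sqrt (by norm_num)
  have h20 : sqrt 2 ≠ (0:ℝ) := by positivity
  have hs0 : ss L b w ≠ 0 := by positivity
  set E := exp ((b+w)*L/2) with hE
  have hE0 : E ≠ 0 := (exp_pos _).ne'
  have e1 : exp ((b+w)*L) = E^2 := by rw [hE, ← exp_nat_mul]; congr 1; push_cast; ring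
  have e2 : exp (-((b+w)*L)) = (E^2)⁻¹ := by rw [exp_neg, e1]
  have e3 : exp (-(2*(b+w)*L)) = (E^4)⁻¹ := by
    rw [exp_neg, hE, ← exp_nat_mul]; congr 2; push_cast; ring
  have e4 : exp (-(b*L/2)) * exp (-(L/2) * w) = E⁻¹ := by
    rw [← exp_add, hE, ← exp_neg]; congr 1; ring
  have : -(exp (-(b*L/2)) / (2 * sqrt 2)) *
      (exp (-(L/2) * w) * ((1 - exp (-(2*(b+w)*L))) / ss L b w ^ 3)) =
      -((exp (-(b*L/2)) * exp (-(L/2) * w)) / (2 * sqrt 2)) *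
      ((1 - exp (-(2*(b+w)*L))) / ss L b w ^ 3) := by ring
  rw [this, e4, e1, e2, e3, mul_pow, mul_pow, show sqrt 2 ^ 3 = 2 * sqrt (2:ℝ) by
    rw [pow_succ, h2]]
  field_simp
  ring

lemma f2_eq (L b w : ℝ) (hL : 0 < L) (hb : 0 < b) (hw : 0 < w) :
    (b+w) / sqrt (DD L b (b+w))
      = (exp (-(b*L/2)) / sqrt 2) * (G2 L b w + b * exp (-(L/2) * w)) := by
  have hs := ss_ge L b w hL hb hw
  have hq := ss_sq L b w hL hb hw
  rw [DD_sqrt L b w hL hb hw, G2]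
  have h20 : sqrt 2 ≠ (0:ℝ) := by positivity
  have hs0 : ss L b w ≠ 0 := by positivity
  have hs1 : 1 + ss L b w ≠ 0 := by positivity
  have hbw : b + w ≠ 0 := by positivity
  have e4 : exp (-(b*L/2)) * exp (-(L/2) * w) = (exp ((b+w)*L/2))⁻¹ := by
    rw [← exp_add, ← exp_neg]; congr 1; ring
  have e5 : w * (1 - exp (-(2*(b+w)*L))) / 2 = (b+w) * (1 - ss L b w ^ 2) := by
    rw [hq]; field_simp; ring
  rw [e5]
  set s := ss L b w
  have e6 : w + (b+w) * (1 - s^2) / (s * (1 + s)) + b = (b+w) / s := by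
    field_simp; ring
  calc (b+w) / (sqrt 2 * exp ((b+w)*L/2) * s)
      = (exp ((b+w)*L/2))⁻¹ / sqrt 2 * ((b+w)/s) := by field_simp
    _ = _ := by rw [← e4, ← e6]; ring

lemma G1_bound (L b w : ℝ) (hL : 0 < L) (hb : 0 < b) (hw : 0 < w) :
    ‖G1 L b w‖ ≤ 8 * exp (-(L/2) * w) := by
  have hs := ss_ge L b w hL hb hw
  obtain ⟨h0, h1, -, -⟩ := q_bounds L b w hL hb hw
  have hs3 : (1/2:ℝ)^3 ≤ ss L b w ^ 3 := by gcongr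
  have : (1 - exp (-(2*(b+w)*L))) / ss L b w ^ 3 ≤ 8 := by
    rw [div_le_iff₀ (by positivity)]; linarith
  have h' : 0 ≤ (1 - exp (-(2*(b+w)*L))) / ss L b w ^ 3 := div_nonneg h0 (by positivity)
  rw [G1, norm_of_nonneg (by positivity), mul_comm]
  gcongr

lemma G2_bound (L b w : ℝ) (hL : 0 < L) (hb : 0 < b) (hw : 0 < w) :
    ‖G2 L b w‖ ≤ 2 * (w * exp (-(L/2) * w)) := by
  have hs := ss_ge L b w hL hb hw
  obtain ⟨h0, h1, -, -⟩ := q_bounds L b w hL hb hw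
  have h3 : w * (1 - exp (-(2*(b+w)*L))) / 2 / (ss L b w * (1 + ss L b w)) ≤ w := by
    rw [div_le_iff₀ (by positivity)]
    have : 1/2 ≤ ss L b w * (1 + ss L b w) := by nlinarith
    nlinarith
  have h' : 0 ≤ w * (1 - exp (-(2*(b+w)*L))) / 2 / (ss L b w * (1 + ss L b w)) :=
    div_nonneg (div_nonneg (mul_nonneg hw.le h0) (by norm_num)) (by positivity)
  rw [G2, norm_of_nonneg (by positivity), show 2 * (w * exp (-(L/2) * w)) =
    exp (-(L/2) * w) * (w + w) by ring]
  gcongr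

lemma G1_meas (L b : ℝ) : Measurable (G1 L b) := by
  unfold G1 ss; fun_prop

lemma G2_meas (L b : ℝ) : Measurable (G2 L b) := by
  unfold G2 ss; fun_prop

lemma exp_lim (L w : ℝ) (hL : 0 < L) :
    Tendsto (fun b : ℝ => exp (-(2*(b+w)*L))) atTop (nhds 0) := by
  refine tendsto_exp_neg_atTop_nhds_zero.comp ?_
  refine Tendsto.atTop_mul_const hL ?_
  exact Tendsto.const_mul_atTop (by norm_num) (tendsto_atTop_add_const_right _ _ tendsto_id)

lemma ss_lim (L w : ℝ) (hL : 0 < L) :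
    Tendsto (fun b : ℝ => ss L b w) atTop (nhds 1) := by
  have h1 : Tendsto (fun b : ℝ => w/(b+w)) atTop (nhds 0) :=
    tendsto_const_nhds.div_atTop (tendsto_atTop_add_const_right _ _ tendsto_id)
  have := (((h1.mul ((exp_lim L w hL).const_sub 1)).div_const 2).const_sub 1).sqrt
  simpa [ss] using this

lemma G1_lim (L w : ℝ) (hL : 0 < L) :
    Tendsto (fun b : ℝ => G1 L b w) atTop (nhds (exp (-(L/2) * w))) := by
  have := (((exp_lim L w hL).const_sub 1).div ((ss_lim L w hL).pow 3) (by norm_num)).const_mul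
    (exp (-(L/2) * w))
  simpa [G1] using this

lemma G2_lim (L w : ℝ) (hL : 0 < L) :
    Tendsto (fun b : ℝ => G2 L b w) atTop (nhds (5/4 * (w * exp (-(L/2) * w)))) := by
  have hs := ss_lim L w hL
  have := ((((((exp_lim L w hL).const_sub 1).const_mul w).div_const 2).div
    (hs.mul (hs.const_add 1)) (by norm_num)).const_add w).const_mul
    (exp (-(L/2) * w))
  rw [show 5/4 * (w * exp (-(L/2) * w)) =
    exp (-(L/2) * w) * (w + w * (1 - 0) / 2 / (1 * (1 + 1))) by ring]
  exact this

lemma int0 (L : ℝ) (hL : 0 < L) : ∫ w in Set.Ioi (0:ℝ), exp (-(L/2) * w) = 2 / L := by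
  rw [integral_exp_mul_Ioi (by linarith)]; simp

lemma int1 (L : ℝ) (hL : 0 < L) : ∫ w in Set.Ioi (0:ℝ), w * exp (-(L/2) * w) = 4 / L^2 := by
  have := integral_rpow_mul_exp_neg_mul_Ioi (a := 2) (r := L/2) (by norm_num) (by linarith)
  have h2 : Real.Gamma 2 = 1 := Real.Gamma_two
  rw [h2] at this
  norm_num at this
  simp only [neg_mul]
  rw [this]; field_simp; norm_num

lemma ii0 (L : ℝ) (hL : 0 < L) : IntegrableOn (fun w => exp (-(L/2) * w)) (Set.Ioi (0:ℝ)) :=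
  .of_integral_ne_zero (by rw [int0 L hL]; positivity)

lemma ii1 (L : ℝ) (hL : 0 < L) : IntegrableOn (fun w => w * exp (-(L/2) * w)) (Set.Ioi (0:ℝ)) :=
  .of_integral_ne_zero (by rw [int1 L hL]; positivity)

lemma G1_int (L b : ℝ) (hL : 0 < L) (hb : 0 < b) : IntegrableOn (G1 L b) (Set.Ioi 0) :=
  Integrable.mono' ((ii0 L hL).const_mul 8) (G1_meas L b).aestronglyMeasurable
    ((ae_restrict_iff' measurableSet_Ioi).2 (ae_of_all _ fun w hw => G1_bound L b w hL hb hw))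

lemma G2_int (L b : ℝ) (hL : 0 < L) (hb : 0 < b) : IntegrableOn (G2 L b) (Set.Ioi 0) :=
  Integrable.mono' ((ii1 L hL).const_mul 2) (G2_meas L b).aestronglyMeasurable
    ((ae_restrict_iff' measurableSet_Ioi).2 (ae_of_all _ fun w hw => G2_bound L b w hL hb hw))

lemma lim1 (L : ℝ) (hL : 0 < L) :
    Tendsto (fun b => ∫ w in Set.Ioi (0:ℝ), G1 L b w) atTop (nhds (2/L)) := by
  rw [← int0 L hL]
  refine tendsto_integral_filter_of_dominated_convergence (fun w => 8 * exp (-(L/2) * w))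
    (.of_forall fun b => (G1_meas L b).aestronglyMeasurable) ?_ ((ii0 L hL).const_mul 8)
    (ae_of_all _ fun w => G1_lim L w hL)
  filter_upwards [eventually_gt_atTop 0] with b hb
  exact (ae_restrict_iff' measurableSet_Ioi).2 (ae_of_all _ fun w hw => G1_bound L b w hL hb hw)

lemma lim2 (L : ℝ) (hL : 0 < L) :
    Tendsto (fun b => ∫ w in Set.Ioi (0:ℝ), G2 L b w) atTop (nhds (5/4 * (4/L^2))) := by
  rw [← int1 L hL, ← integral_const_mul]
  refine tendsto_integral_filter_of_dominated_convergence (fun w => 2 * (w * exp (-(L/2) * w)))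
    (.of_forall fun b => (G2_meas L b).aestronglyMeasurable) ?_ ((ii1 L hL).const_mul 2)
    (ae_of_all _ fun w => G2_lim L w hL)
  filter_upwards [eventually_gt_atTop 0] with b hb
  exact (ae_restrict_iff' measurableSet_Ioi).2 (ae_of_all _ fun w hw => G2_bound L b w hL hb hw)

lemma J1 (L b : ℝ) (hL : 0 < L) (hb : 0 < b) :
    ∫ u in Set.Ioi (-b), (exp (-(u*L)) - exp (u*L)) / (DD L b u) ^ ((3:ℝ)/2)
      = -(exp (-(b*L/2)) / (2 * sqrt 2)) * ∫ w in Set.Ioi (0:ℝ), G1 L b w := by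
  rw [fold_odd (fun u => (exp (-(u*L)) - exp (u*L)) / (DD L b u) ^ ((3:ℝ)/2))
    (fun u => exp (-(u*L)) + exp (u*L)) b hb, ← integral_const_mul]
  · exact setIntegral_congr_fun measurableSet_Ioi fun w hw => f1_eq L b w hL hb hw
  · intro u; simp only [DD_even, neg_mul, neg_neg]; ring
  · unfold DD; fun_prop
  · fun_prop
  · intro u
    have hD := DD_ge L b u hL hb
    have h1 : 1 ≤ (DD L b u) ^ ((3:ℝ)/2) := one_le_rpow (by linarith) (by norm_num)
    rw [abs_div, abs_of_nonneg (a := (DD L b u) ^ ((3:ℝ)/2)) (by linarith)]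
    refine (div_le_self (abs_nonneg _) h1).trans ?_
    rw [abs_le]
    constructor <;> linarith [exp_pos (u*L), exp_pos (-(u*L))]
  · exact IntegrableOn.congr_fun ((G1_int L b hL hb).const_mul _)
      (fun w hw => (f1_eq L b w hL hb hw).symm) measurableSet_Ioi

lemma J2 (L b : ℝ) (hL : 0 < L) (hb : 0 < b) :
    ∫ u in Set.Ioi (-b), u / sqrt (DD L b u)
      = (exp (-(b*L/2)) / sqrt 2) * ((∫ w in Set.Ioi (0:ℝ), G2 L b w) + b * (2/L)) := by
  have hii := (ii0 L hL).const_mul b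
  rw [fold_odd (fun u => u / sqrt (DD L b u)) (fun u => |u|) b hb, ← int0 L hL,
    ← integral_const_mul, ← integral_add (G2_int L b hL hb) hii, ← integral_const_mul]
  · exact setIntegral_congr_fun measurableSet_Ioi fun w hw => f2_eq L b w hL hb hw
  · intro u; simp only [DD_even]; ring
  · unfold DD; fun_prop
  · fun_prop
  · intro u
    have hD := DD_ge L b u hL hb
    have h1 : 1 ≤ sqrt (DD L b u) := one_le_sqrt.2 (by linarith)
    rw [abs_div, abs_of_nonneg (a := sqrt _) (by linarith)]
    exact div_le_self (abs_nonneg _) h1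
  · exact IntegrableOn.congr_fun (((G2_int L b hL hb).add hii).const_mul _)
      (fun w hw => (f2_eq L b w hL hb hw).symm) measurableSet_Ioi

theorem stmt_11 (T : ℝ) (hT0 : 0 < T) (hT1 : T < 1)
    (I₁ I₂ : ℝ → ℝ)
    (hI₁ : ∀ α : ℝ, I₁ α =
      (Real.exp ((1 - 2*α)/4 * Real.log (1 - T)) / Real.sqrt 2) *
        ∫ u in Set.Ioi ((1 - 2*α)/2),
          (Real.exp (u * Real.log (1 - T)) - Real.exp (-u * Real.log (1 - T))) /
            ((1 + (1 - 2*α)/(2*u)) * Real.exp (u * Real.log (1 - T)) +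
             (1 - (1 - 2*α)/(2*u)) * Real.exp (-u * Real.log (1 - T))) ^ ((3:ℝ)/2))
    (hI₂ : ∀ α : ℝ, I₂ α =
      (Real.log (1 - T) * Real.exp ((1 - 2*α)/4 * Real.log (1 - T)) / Real.sqrt 2) *
        ∫ u in Set.Ioi ((1 - 2*α)/2),
          u / Real.sqrt
            ((1 + (1 - 2*α)/(2*u)) * Real.exp (u * Real.log (1 - T)) +
             (1 - (1 - 2*α)/(2*u)) * Real.exp (-u * Real.log (1 - T)))) :
    Filter.Tendsto (fun α : ℝ => (1/2 + I₁ α - I₂ α) - α)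
      Filter.atTop (nhds (-2 / Real.log (1 - T))) := by
  obtain ⟨L, hLdef⟩ : ∃ L, Real.log (1 - T) = -L := ⟨-Real.log (1-T), by ring⟩
  have hL : 0 < L := by
    have := Real.log_neg (x := 1 - T) (by linarith) (by linarith)
    linarith
  simp only [hLdef] at hI₁ hI₂ ⊢
  have hlim : Tendsto (fun α : ℝ => -(1/4) * (∫ w in Set.Ioi (0:ℝ), G1 L (α - 1/2) w)
      + L/2 * ∫ w in Set.Ioi (0:ℝ), G2 L (α - 1/2) w) atTop (nhds (-2 / -L)) := by
    have hsub : Tendsto (fun α : ℝ => α - 1/2) atTop atTop :=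
      tendsto_atTop_add_const_right _ _ tendsto_id
    have := (((lim1 L hL).comp hsub).const_mul (-(1/4))).add
      (((lim2 L hL).comp hsub).const_mul (L/2))
    rw [show -2 / -L = -(1 / 4) * (2 / L) + L / 2 * (5 / 4 * (4 / L ^ 2)) by field_simp; norm_num]
    exact this
  refine hlim.congr' ?_
  filter_upwards [eventually_gt_atTop (1/2 : ℝ)] with α hα
  obtain ⟨b, rfl⟩ : ∃ b, α = b + 1/2 := ⟨α - 1/2, by ring⟩
  have hb : 0 < b := by linarith
  have hDD : ∀ u : ℝ, (1 + (1 - 2*(b+1/2))/(2*u)) * Real.exp (u * -L) +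
             (1 - (1 - 2*(b+1/2))/(2*u)) * Real.exp (-u * -L) = DD L b u := by
    intro u
    have h : (1 - 2*(b+1/2))/(2*u) = -(b/u) := by
      rw [show 1 - 2*(b+1/2) = 2 * (-b) by ring, mul_div_mul_left _ _ (by norm_num), neg_div]
    rw [h, DD, mul_neg, neg_mul_neg, sub_neg_eq_add, ← sub_eq_add_neg]
  rw [hI₁, hI₂]
  simp only [hDD]
  rw [show (1 - 2*(b+1/2))/2 = -b by ring, show (1 - 2*(b+1/2))/4 * -L = b*L/2 by ring,
    add_sub_cancel_right, J2 L b hL hb]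
  simp only [mul_neg, neg_mul, neg_neg]
  rw [J1 L b hL hb, exp_neg]
  have h2 : sqrt 2 ^ 2 = (2:ℝ) := sq_sqrt (by norm_num)
  have h20 : sqrt 2 ≠ (0:ℝ) := by positivity
  have hE := (exp_pos (b*L/2)).ne'
  generalize exp (b*L/2) = E at *
  field_simp
  rw [h2]
  ring
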